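/- Let q ≥ 3, α = 1/(2q) and d = (2q-1) log q - c with c = O(1) as q → ∞. Then Σ_{d,q}(α) = (c-1)/(2q) + Õ(q^{-2}), where Õ suppresses polylogarithmic factors in q. Consequently, if c ≤ 1 - ε for a fixed ε > 0, then Σ_{d,q}(α) < 0 for all sufficiently large q. -/

import Mathlib

open Real Filter Asymptotics Finset

/-- The complexity `Σ_{d,q}(α)` with a real degree parameter `d` (real power). -/
noncomputable def SigmaRSBReal (d : ℝ) (q : ℕ) (α : ℝ) : ℝ :=
  Real.log (∑ i ∈ range q,
      (-1 : ℝ) ^ i * (q.choose (i + 1)) * (1 - (i + 1) * (1 - α) / q) ^ d) -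
    (d / 2) * Real.log (1 - (1 - α) ^ 2 / q)

/-- `f = Õ(q^{-m})`. -/
def PO (m : ℕ) (f : ℕ → ℝ) : Prop :=
  ∃ K : ℕ, f =O[atTop] (fun q : ℕ => (Real.log q) ^ K * (1 / (q : ℝ)) ^ m)

lemma ev_log_ge (B : ℝ) : ∀ᶠ q : ℕ in atTop, B ≤ Real.log q :=
  (Real.tendsto_log_atTop.comp tendsto_natCast_atTop_atTop).eventually_ge_atTop B

lemma log_pow_mono {K K' : ℕ} (h : K ≤ K') (m : ℕ) :
    (fun q : ℕ => (Real.log q) ^ K * (1 / (q : ℝ)) ^ m) =O[atTop]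
      (fun q : ℕ => (Real.log q) ^ K' * (1 / (q : ℝ)) ^ m) := by
  apply IsBigO.of_bound 1
  filter_upwards [ev_log_ge 1] with q hq
  have h1 : 0 ≤ Real.log q := by linarith
  rw [Real.norm_of_nonneg (by positivity), Real.norm_of_nonneg (by positivity), one_mul]
  gcongr

lemma PO.add {m : ℕ} {f g : ℕ → ℝ} (hf : PO m f) (hg : PO m g) :
    PO m (fun q => f q + g q) := by
  obtain ⟨K, hK⟩ := hf
  obtain ⟨K', hK'⟩ := hg
  exact ⟨K + K', (hK.trans (log_pow_mono (by omega) m)).add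
    (hK'.trans (log_pow_mono (by omega) m))⟩

lemma PO.neg {m : ℕ} {f : ℕ → ℝ} (hf : PO m f) : PO m (fun q => - f q) := by
  obtain ⟨K, hK⟩ := hf
  exact ⟨K, hK.neg_left⟩

lemma PO.sub {m : ℕ} {f g : ℕ → ℝ} (hf : PO m f) (hg : PO m g) :
    PO m (fun q => f q - g q) := by
  simpa [sub_eq_add_neg] using hf.add hg.neg

lemma PO.mul {m n : ℕ} {f g : ℕ → ℝ} (hf : PO m f) (hg : PO n g) :
    PO (m + n) (fun q => f q * g q) := by
  obtain ⟨K, hK⟩ := hf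
  obtain ⟨K', hK'⟩ := hg
  refine ⟨K + K', (hK.mul hK').congr_right ?_⟩
  intro q
  ring

lemma PO.mono {m n : ℕ} {f : ℕ → ℝ} (hf : PO n f) (h : m ≤ n) : PO m f := by
  obtain ⟨K, hK⟩ := hf
  refine ⟨K, hK.trans ?_⟩
  apply IsBigO.of_bound 1
  filter_upwards [ev_log_ge 1, eventually_ge_atTop 1] with q hq hq1
  have h1 : 0 ≤ Real.log q := by linarith
  rw [Real.norm_of_nonneg (by positivity), Real.norm_of_nonneg (by positivity), one_mul]
  have hq1' : (1 : ℝ) ≤ q := by exact_mod_cast hq1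
  gcongr ?_ * ?_
  apply pow_le_pow_of_le_one (by positivity) _ h
  rw [div_le_one (by positivity)]
  exact hq1'

lemma PO.of_le {m : ℕ} {f g : ℕ → ℝ} (hg : PO m g) (h : ∀ᶠ q in atTop, |f q| ≤ |g q|) :
    PO m f := by
  obtain ⟨K, hK⟩ := hg
  refine ⟨K, IsBigO.trans (IsBigO.of_bound 1 ?_) hK⟩
  filter_upwards [h] with q hq
  simpa using hq

lemma PO.congr {m : ℕ} {f g : ℕ → ℝ} (hg : PO m g) (h : ∀ᶠ q in atTop, f q = g q) :
    PO m f := hg.of_le (h.mono fun q hq => by rw [hq])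

lemma PO.const (a : ℝ) : PO 0 (fun _ => a) := by
  refine ⟨0, ?_⟩
  simpa using isBigO_const_const a (one_ne_zero : (1 : ℝ) ≠ 0) atTop

lemma PO.inv : PO 1 (fun q => 1 / (q : ℝ)) :=
  ⟨0, by simpa using isBigO_refl _ _⟩

lemma PO.log : PO 0 (fun q => Real.log q) :=
  ⟨1, by simpa using isBigO_refl _ _⟩

lemma PO.bdd {c : ℕ → ℝ} {M : ℝ} (h : ∀ q, |c q| ≤ M) : PO 0 c :=
  (PO.const M).of_le (Eventually.of_forall fun q => (h q).trans (le_abs_self M))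

lemma PO.natMul {m : ℕ} {f : ℕ → ℝ} (hf : PO (m + 1) f) : PO m (fun q => (q : ℝ) * f q) := by
  obtain ⟨K, hK⟩ := hf
  refine ⟨K, ((isBigO_refl (fun q : ℕ => (q : ℝ)) atTop).mul hK).trans_eventuallyEq ?_⟩
  filter_upwards [eventually_ge_atTop 1] with q hq1
  have : (q : ℝ) * (1 / q) = 1 := by
    field_simp
  rw [pow_succ]
  linear_combination (Real.log q ^ K * (1 / (q : ℝ)) ^ m) * this

lemma PO.tendsto {f : ℕ → ℝ} (hf : PO 1 f) : Tendsto f atTop (nhds 0) := by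
  obtain ⟨K, hK⟩ := hf
  refine hK.trans_tendsto ?_
  have h := (isLittleO_pow_log_id_atTop (n := K)).tendsto_div_nhds_zero.comp
    (tendsto_natCast_atTop_atTop (R := ℝ))
  refine h.congr fun q => ?_
  simp [div_eq_mul_inv]

lemma PO.ev_le {f : ℕ → ℝ} (hf : PO 1 f) {δ : ℝ} (hδ : 0 < δ) :
    ∀ᶠ q in atTop, |f q| ≤ δ := by
  have := (hf.tendsto.abs).eventually_le_const (u := δ) (by simpa using hδ)
  exact this

lemma PO.log3 {x : ℕ → ℝ} (hx : PO 1 x) :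
    PO 3 (fun q => Real.log (1 - x q) + x q + x q ^ 2 / 2) := by
  refine (((PO.const 2).mul ((hx.mul hx).mul hx)).congr (f := fun q => 2 * x q ^ 3)
    (Eventually.of_forall fun q => by ring)).of_le ?_
  filter_upwards [hx.ev_le (δ := 1 / 2) (by norm_num)] with q hq
  have h := Real.abs_log_sub_add_sum_range_le (x := x q) (by linarith) 2
  norm_num [Finset.sum_range_succ] at h
  have e : Real.log (1 - x q) + x q + x q ^ 2 / 2 = x q + x q ^ 2 / 2 + Real.log (1 - x q) := by
    ring
  rw [e]
  refine h.trans ?_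
  rw [abs_mul, abs_pow, abs_two, div_le_iff₀ (by linarith)]
  nlinarith [pow_nonneg (abs_nonneg (x q)) 3]

lemma PO.log2 {x : ℕ → ℝ} (hx : PO 1 x) :
    PO 2 (fun q => Real.log (1 - x q) + x q) := by
  refine ((hx.log3.mono (by norm_num : 2 ≤ 3)).sub ((PO.const (1/2)).mul (hx.mul hx))).congr
    (Eventually.of_forall fun q => by ring)

lemma PO.exp2 {x : ℕ → ℝ} (hx : PO 1 x) :
    PO 2 (fun q => Real.exp (x q) - 1 - x q) := by
  refine (hx.mul hx).of_le ?_
  filter_upwards [hx.ev_le (δ := 1) (by norm_num)] with q hq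
  have h := Real.abs_exp_sub_one_sub_id_le hq
  rw [← pow_two, abs_of_nonneg (sq_nonneg (x q))]
  exact h

lemma PO.exp1 {x : ℕ → ℝ} (hx : PO 1 x) :
    PO 1 (fun q => Real.exp (x q) - 1) :=
  ((hx.exp2.mono (by norm_num : 1 ≤ 2)).add hx).congr (Eventually.of_forall fun q => by ring)

lemma sum_split (q : ℕ) (hq : 2 ≤ q) (d β : ℝ) (hd : 0 ≤ d) (hβ0 : 0 < β) (hβ1 : β < 1)
    (hy : (q : ℝ) * Real.exp (-(β * (d * (1 / q)))) ≤ 1 / 2) :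
    |(∑ i ∈ range q, (-1 : ℝ) ^ i * (q.choose (i + 1)) * (1 - (i + 1) * β / q) ^ d)
      - (q * Real.exp (d * Real.log (1 - β * (1 / q)))
        - q * (q - 1) / 2 * Real.exp (d * Real.log (1 - 2 * β * (1 / q))))|
      ≤ 2 * ((q : ℝ) * Real.exp (-(β * (d * (1 / q))))) ^ 3 := by
  set y := (q : ℝ) * Real.exp (-(β * (d * (1 / q)))) with hydef
  have hq0 : (0 : ℝ) < q := by
    have : 0 < q := by omega
    exact_mod_cast this
  have hy0 : 0 < y := by positivity
  have hbase : ∀ i < q, 0 < 1 - ((i : ℝ) + 1) * β / q := by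
    intro i hi
    have h1 : (i : ℝ) + 1 ≤ q := by exact_mod_cast hi
    rw [sub_pos, div_lt_one hq0]
    nlinarith
  have hterm : ∀ i < q, |(-1 : ℝ) ^ i * (q.choose (i + 1)) * (1 - (i + 1) * β / q) ^ d|
      ≤ y ^ (i + 1) := by
    intro i hi
    have hb := hbase i hi
    rw [abs_mul, abs_mul, abs_pow, abs_neg, abs_one, one_pow, one_mul,
      abs_of_nonneg (by positivity : (0 : ℝ) ≤ (q.choose (i + 1) : ℝ)),
      abs_of_nonneg (Real.rpow_nonneg hb.le d), hydef, mul_pow]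
    have h1 : ((q.choose (i + 1) : ℕ) : ℝ) ≤ (q : ℝ) ^ (i + 1) := by
      exact_mod_cast Nat.choose_le_pow q (i + 1)
    have h2 : (1 - ((i : ℝ) + 1) * β / q) ^ d ≤ Real.exp (-(β * (d * (1 / q)))) ^ (i + 1) := by
      rw [← Real.exp_nat_mul, Real.rpow_def_of_pos hb]
      apply Real.exp_le_exp.mpr
      have := Real.log_le_sub_one_of_pos hb
      have h3 := mul_le_mul_of_nonneg_right this hd
      refine h3.trans (le_of_eq ?_)
      push_cast
      ring
    exact mul_le_mul h1 h2 (Real.rpow_nonneg hb.le d) (by positivity)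
  obtain ⟨n, hn⟩ : ∃ n, q = n + 2 := ⟨q - 2, by omega⟩
  have hsum : ∀ f : ℕ → ℝ, ∑ i ∈ range q, f i = f 0 + f 1 + ∑ i ∈ range n, f (i + 2) := by
    intro f
    rw [hn, Finset.sum_range_succ', Finset.sum_range_succ']
    ring
  rw [hsum]
  have e0 : (-1 : ℝ) ^ 0 * (q.choose (0 + 1)) * (1 - (((0 : ℕ) : ℝ) + 1) * β / q) ^ d
      = q * Real.exp (d * Real.log (1 - β * (1 / q))) := by
    rw [Real.rpow_def_of_pos (hbase 0 (by omega)), mul_comm (Real.log _) d]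
    simp [div_eq_mul_inv]
  have e1 : (-1 : ℝ) ^ 1 * (q.choose (1 + 1)) * (1 - (((1 : ℕ) : ℝ) + 1) * β / q) ^ d
      = - (q * (q - 1) / 2 * Real.exp (d * Real.log (1 - 2 * β * (1 / q)))) := by
    rw [Real.rpow_def_of_pos (hbase 1 (by omega)), mul_comm (Real.log _) d,
      Nat.cast_choose_two]
    norm_num [div_eq_mul_inv]
  rw [e0, e1]
  have e2 : ∀ a b c : ℝ, a + -b + c - (a - b) = c := by intros; ring
  rw [e2]
  calc _ ≤ ∑ i ∈ range n, y ^ (i + 2 + 1) := by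
        refine (Finset.abs_sum_le_sum_abs _ _).trans (Finset.sum_le_sum ?_)
        intro i hi
        exact hterm (i + 2) (by have := Finset.mem_range.mp hi; omega)
    _ ≤ ∑ i ∈ range n, y ^ 3 * (1 / 2) ^ i := by
        refine Finset.sum_le_sum fun i _ => ?_
        rw [show i + 2 + 1 = 3 + i by ring, pow_add]
        gcongr
    _ = y ^ 3 * ∑ i ∈ range n, (1 / 2 : ℝ) ^ i := by rw [Finset.mul_sum]
    _ ≤ y ^ 3 * 2 := by
        gcongr
        exact sum_geometric_two_le n
    _ = 2 * y ^ 3 := by ring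

lemma main_PO (c : ℕ → ℝ) (M : ℝ) (hc : ∀ q : ℕ, |c q| ≤ M) :
    PO 2 (fun q : ℕ =>
          SigmaRSBReal ((2 * q - 1) * Real.log q - c q) q (1 / (2 * q)) -
            (c q - 1) / (2 * q)) := by
  have hcP : PO 0 c := PO.bdd hc
  have hL := PO.log
  have hu := PO.inv
  have hu2 : PO 2 (fun q => 1 / (q : ℝ) * (1 / (q : ℝ))) := hu.mul hu
  have hu3 : PO 3 (fun q => 1 / (q : ℝ) * (1 / (q : ℝ)) * (1 / (q : ℝ))) := hu2.mul hu
  have hC := fun a => PO.const a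
  have hqu : ∀ᶠ q : ℕ in atTop, (q : ℝ) * (1 / q) = 1 := by
    filter_upwards [eventually_ge_atTop 1] with q hq
    field_simp
  set d : ℕ → ℝ := fun q => (2 * q - 1) * Real.log q - c q with hd
  set b : ℕ → ℝ := fun q => 1 - 1 / (2 * (q : ℝ)) with hb
  have hbu : ∀ q, b q = 1 - 1 / (q : ℝ) / 2 := by
    intro q
    simp only [hb]
    ring
  -- d / q
  have hD : ∀ᶠ q : ℕ in atTop,
      d q * (1 / q) = (2 - 1 / (q : ℝ)) * Real.log q - c q * (1 / q) := by
    filter_upwards [hqu] with q h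
    simp only [hd]
    linear_combination (2 * Real.log q) * h
  have hbP : PO 0 b := (((hC 1).sub (((hC (1 / 2)).mul hu).mono (Nat.zero_le _)))).congr
    (Eventually.of_forall fun q => by rw [hbu]; ring)
  have hDP : PO 0 (fun q => d q * (1 / q)) :=
    ((((hC 2).sub (hu.mono (Nat.zero_le _))).mul hL).sub
      ((hcP.mul hu).mono (Nat.zero_le _))).congr hD
  have hdmul : ∀ {m : ℕ} {f : ℕ → ℝ}, PO (m + 1) f → PO m (fun q => d q * f q) := by
    intro m f hf
    have := (hDP.mul hf.natMul).mono (m := m) (by omega)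
    refine this.congr ?_
    filter_upwards [hqu] with q h
    linear_combination (- d q * f q) * h
  -- logarithms
  have hx1 : PO 1 (fun q => b q * (1 / (q : ℝ))) := by simpa using hbP.mul hu
  have hx2 : PO 1 (fun q => 2 * b q * (1 / (q : ℝ))) := by
    simpa using ((hC 2).mul hbP).mul hu
  have hx3 : PO 1 (fun q => b q ^ 2 * (1 / (q : ℝ))) := by
    simpa [pow_two] using (hbP.mul hbP).mul hu
  have hl1 : PO 3 (fun q => Real.log (1 - b q * (1 / (q : ℝ))) + 1 / (q : ℝ)) := by
    have h := hx1.log3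
    have h' : PO 3 (fun q => 1 / (q : ℝ) * (1 / (q : ℝ)) * (1 / (q : ℝ)) *
        (1 / 2 - 1 / 8 * (1 / (q : ℝ)))) := by
      simpa using hu3.mul ((hC (1/2)).sub (((hC (1/8)).mul hu).mono (Nat.zero_le _)))
    refine (h.add h').congr (Eventually.of_forall fun q => ?_)
    simp only [hbu]
    ring
  have hl2 : PO 2 (fun q => Real.log (1 - 2 * b q * (1 / (q : ℝ))) + 2 * (1 / (q : ℝ))) := by
    refine (hx2.log2.add hu2).congr (Eventually.of_forall fun q => ?_)
    simp only [hbu]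
    ring
  have hl3 : PO 3 (fun q => Real.log (1 - b q ^ 2 * (1 / (q : ℝ))) + 1 / (q : ℝ)
      - 1 / (q : ℝ) * (1 / (q : ℝ)) / 2) := by
    have h := hx3.log3
    have h' : PO 3 (fun q => 1 / (q : ℝ) * (1 / (q : ℝ)) * (1 / (q : ℝ)) *
        (-1/4 + 1/2 * (b q ^ 2 + 1) * (1 - 1/4 * (1 / (q : ℝ))))) := by
      have hb2 : PO 0 (fun q => b q ^ 2) := by simpa [pow_two] using hbP.mul hbP
      have hk : PO 0 (fun q => 1 - 1/4 * (1 / (q : ℝ))) :=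
        (hC 1).sub (((hC (1/4)).mul hu).mono (Nat.zero_le _))
      simpa using hu3.mul ((hC (-1/4)).add (((hC (1/2)).mul (hb2.add (hC 1))).mul hk))
    refine (h.add h').congr (Eventually.of_forall fun q => ?_)
    simp only [hbu]
    ring
  -- exponents
  have he1' : PO 2 (fun q => 2 * Real.log q + d q * Real.log (1 - b q * (1 / (q : ℝ)))
      - (1 / (q : ℝ) * Real.log q + c q * (1 / (q : ℝ)))) := by
    refine (hdmul hl1).congr ?_
    filter_upwards [hD] with q h
    linear_combination -h
  have hw : PO 1 (fun q => 1 / (q : ℝ) * Real.log q + c q * (1 / (q : ℝ))) :=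
    (hu.mul hL).add (by simpa using hcP.mul hu)
  have he1 : PO 1 (fun q => 2 * Real.log q + d q * Real.log (1 - b q * (1 / (q : ℝ)))) :=
    ((he1'.mono (by norm_num : 1 ≤ 2)).add hw).congr (Eventually.of_forall fun q => by ring)
  have hE1 : PO 2 (fun q => Real.exp (2 * Real.log q + d q * Real.log (1 - b q * (1 / (q : ℝ))))
      - 1 - (1 / (q : ℝ) * Real.log q + c q * (1 / (q : ℝ)))) :=
    (he1.exp2.add he1').congr (Eventually.of_forall fun q => by ring)
  have he2 : PO 1 (fun q => 4 * Real.log q + d q * Real.log (1 - 2 * b q * (1 / (q : ℝ)))) := by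
    refine ((hdmul hl2).add ((hC 2).mul hw)).congr ?_
    filter_upwards [hD] with q h
    linear_combination -2 * h
  have hE2 : PO 2 (fun q => 1 / (q : ℝ) * (1 - 1 / (q : ℝ)) / 2 *
      Real.exp (4 * Real.log q + d q * Real.log (1 - 2 * b q * (1 / (q : ℝ))))
      - 1 / (q : ℝ) / 2) := by
    have h1 : PO 2 (fun q => 1 / (q : ℝ) * ((1 - 1 / (q : ℝ)) * (1 / 2)) *
      (Real.exp (4 * Real.log q + d q * Real.log (1 - 2 * b q * (1 / (q : ℝ)))) - 1)) :=
      (hu.mul (((hC 1).sub (hu.mono (Nat.zero_le _))).mul (hC (1/2)))).mul he2.exp1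
    refine (h1.sub (hu2.mul (hC (1/2)))).congr (Eventually.of_forall fun q => by ring)
  -- the tail
  have hey : PO 1 (fun q => 2 * Real.log q - b q * (d q * (1 / (q : ℝ)))) := by
    have h : PO 1 (fun q => 1 / 2 * (1 / (q : ℝ)) * (d q * (1 / q))) :=
      (((hC (1/2)).mul hu).mul hDP)
    refine (hw.add h).congr ?_
    filter_upwards [hD] with q h
    rw [hbu]
    linear_combination -h
  have hy : PO 1 (fun q : ℕ => (q : ℝ) * Real.exp (-(b q * (d q * (1 / q))))) := by
    have h : PO 1 (fun q => 1 / (q : ℝ) *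
        (Real.exp (2 * Real.log q - b q * (d q * (1 / (q : ℝ)))) - 1 + 1)) :=
      hu.mul ((hey.exp1.mono (Nat.zero_le _)).add (hC 1))
    refine h.congr ?_
    filter_upwards [eventually_ge_atTop 1] with q hq
    have hq0 : (0 : ℝ) < q := by positivity
    rw [sub_add_cancel, sub_eq_add_neg, Real.exp_add, two_mul, Real.exp_add, Real.exp_log hq0]
    field_simp
  set S : ℕ → ℝ := fun q => ∑ i ∈ range q,
    (-1 : ℝ) ^ i * (q.choose (i + 1)) * (1 - (i + 1) * b q / q) ^ (d q) with hS
  have hdpos : ∀ᶠ q : ℕ in atTop, 0 ≤ d q := by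
    filter_upwards [ev_log_ge M, ev_log_ge 0, eventually_ge_atTop 1] with q h1 h0 h2
    have h2' : (1 : ℝ) ≤ q := by exact_mod_cast h2
    have h3 := (abs_le.mp (hc q)).2
    simp only [hd]
    nlinarith
  have htail : PO 2 (fun q => (q : ℝ) * (S q
      - (q * Real.exp (d q * Real.log (1 - b q * (1 / q)))
        - q * (q - 1) / 2 * Real.exp (d q * Real.log (1 - 2 * b q * (1 / q)))))) := by
    apply PO.natMul
    refine (((hC 2).mul ((hy.mul hy).mul hy)).congr (f := fun q : ℕ =>
      2 * ((q : ℝ) * Real.exp (-(b q * (d q * (1 / q))))) ^ 3)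
      (Eventually.of_forall fun q => by ring)).of_le ?_
    filter_upwards [hdpos, eventually_ge_atTop 2, hy.ev_le (δ := 1/2) (by norm_num)]
      with q h1 h2 h3
    have h2' : (2 : ℝ) ≤ q := by exact_mod_cast h2
    have hu0 : 0 < 1 / (q : ℝ) := by positivity
    have hu1 : 1 / (q : ℝ) ≤ 1 := by
      rw [div_le_one (by linarith)]
      linarith
    refine (sum_split q h2 (d q) (b q) h1 ?_ ?_ ((le_abs_self _).trans h3)).trans (le_abs_self _)
    · rw [hbu]; linarith
    · rw [hbu]; linarith
  -- q * S
  have hqS : PO 2 (fun q => (q : ℝ) * S q - 1 -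
      (1 / (q : ℝ) * Real.log q + c q * (1 / (q : ℝ)) - 1 / (q : ℝ) / 2)) := by
    refine ((htail.add hE1).sub hE2).congr ?_
    filter_upwards [eventually_ge_atTop 1] with q hq
    have hq0 : (0 : ℝ) < q := by positivity
    have hx : Real.exp (2 * Real.log q) = (q : ℝ) ^ 2 := by
      rw [mul_comm, Real.exp_mul, Real.exp_log hq0]; norm_cast
    have hx4 : Real.exp (4 * Real.log q) = (q : ℝ) ^ 4 := by
      rw [mul_comm, Real.exp_mul, Real.exp_log hq0]; norm_cast
    rw [Real.exp_add, Real.exp_add, hx, hx4]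
    field_simp
    ring
  have hX : PO 1 (fun q => 1 - (q : ℝ) * S q) := by
    have h1 : PO 1 (fun q => 1 / (q : ℝ) * (1 / 2)) := hu.mul (hC (1/2))
    refine (((hqS.mono (by norm_num : 1 ≤ 2)).add hw).sub h1).neg.congr
      (Eventually.of_forall fun q => by ring)
  have hlogS : PO 2 (fun q => Real.log (S q) + Real.log q -
      (1 / (q : ℝ) * Real.log q + c q * (1 / (q : ℝ)) - 1 / (q : ℝ) / 2)) := by
    refine (hX.log2.add hqS).congr ?_
    filter_upwards [eventually_ge_atTop 1, hX.ev_le (δ := 1/2) (by norm_num)] with q hq h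
    have hq0 : (q : ℝ) ≠ 0 := by positivity
    have hS0 : S q ≠ 0 := by
      intro h0
      rw [h0] at h
      norm_num at h
    rw [sub_sub_cancel, Real.log_mul hq0 hS0]
    ring
  have hfin : PO 2 (fun q => d q / 2 * Real.log (1 - b q ^ 2 * (1 / (q : ℝ)))
      + Real.log q - 1 / (q : ℝ) * Real.log q - c q * (1 / (q : ℝ)) / 2) := by
    have h1 : PO 2 (fun q => 1 / (q : ℝ) * (1 / (q : ℝ)) * (1 / 4 * (Real.log q + c q))) :=
      hu2.mul ((hC (1/4)).mul (hL.add hcP))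
    refine (((hC (1/2)).mul (hdmul hl3)).mono (m := 2) (by norm_num)).sub h1 |>.congr ?_
    filter_upwards [hD] with q h
    linear_combination (-1/2 + 1 / (q : ℝ) / 4) * h
  refine (hlogS.sub hfin).congr (Eventually.of_forall fun q => ?_)
  simp only [SigmaRSBReal, hS, hb, hd]
  rw [show ∀ x : ℝ, x / (q : ℝ) = x * (1 / q) by intro x; ring]
  ring

/-- With `α = 1/(2q)` and `d = (2q-1) log q - c(q)` where `c = O(1)`,
`Σ_{d,q}(α) = (c-1)/(2q) + Õ(q⁻²)`; consequently if `c(q) ≤ 1 - ε` for a fixed `ε > 0`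
then `Σ_{d,q}(α) < 0` for all sufficiently large `q`. -/
theorem SigmaRSB_asymptotics (c : ℕ → ℝ) (hc : ∃ M : ℝ, ∀ q : ℕ, |c q| ≤ M) :
    (∃ K : ℕ,
      (fun q : ℕ =>
          SigmaRSBReal ((2 * q - 1) * Real.log q - c q) q (1 / (2 * q)) -
            (c q - 1) / (2 * q)) =O[atTop]
        (fun q : ℕ => (Real.log q) ^ K / (q : ℝ) ^ 2)) ∧
    (∀ ε : ℝ, 0 < ε → (∀ q : ℕ, c q ≤ 1 - ε) →
      ∀ᶠ q : ℕ in atTop,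
        SigmaRSBReal ((2 * q - 1) * Real.log q - c q) q (1 / (2 * q)) < 0) := by
  obtain ⟨M, hM⟩ := hc
  have h := main_PO c M hM
  refine ⟨?_, ?_⟩
  · obtain ⟨K, hK⟩ := h
    refine ⟨K, hK.congr_right fun q => ?_⟩
    rw [one_div, inv_pow, div_eq_mul_inv]
  · intro ε hε hcε
    filter_upwards [h.natMul.ev_le (δ := ε / 4) (by positivity), eventually_ge_atTop 1]
      with q h1 hq
    have hq0 : (0 : ℝ) < q := by positivity
    have h2 := (abs_le.mp h1).2
    rw [mul_sub, show (q : ℝ) * ((c q - 1) / (2 * q)) = (c q - 1) / 2 by field_simp] at h2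
    have h3 := hcε q
    by_contra hcon
    have h4 := mul_nonneg hq0.le (not_lt.mp hcon)
    linarith
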